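/- arXiv:1609.07027 — 3 statements merged into one kernel-verified Lean document; each statement's English description precedes it below -/
import Mathlib

section
/- Consider an n-server PIR scheme for a database of k records of R bits each, with k ≥ 1, and let d be an integer with 0 ≤ d ≤ R. Fix q_1 ∈ Q_1, and write query tuples as (q_1, q_other) where q_other collects the queries to servers 2, …, n, and response tuples as (c_1, c_other). Suppose that for every possible query tuple of the form (q_1, q_other), the number of tuples c_other for which there exists c_1 such that (c_1, c_other) is possible for (q_1, q_other) is at most 2^d. Then for every possible query tuple (q_1, q'_other), the number of values c_1 for which there exists c_other such that (c_1, c_other) is possible for (q_1, q'_other) is at least 2^{k(R−d)}. -/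
open scoped ENNReal

/-- An `n`-server PIR scheme for a database of `k` records of `R` bits each. -/
structure PIRScheme (n k R : ℕ) where
  /-- The query set for each server. -/
  Q : Fin n → Type
  /-- Each query set is finite. -/
  fintypeQ : ∀ r, Fintype (Q r)
  /-- The storage size (in bits) of each server. -/
  s : Fin n → ℕ
  /-- The encoding map of each server. -/
  E : (r : Fin n) → (Fin k → Fin R → Bool) → (Fin (s r) → Bool)
  /-- For each record index `ℓ`, a probability distribution on query tuples. -/
  D : Fin k → PMF ((r : Fin n) → Q r)
  /-- The response length of each server on each query. -/
  d : (r : Fin n) → Q r → ℕ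
  /-- The deterministic response map of each server. -/
  resp : (r : Fin n) → (q : Q r) → (Fin (s r) → Bool) → (Fin (d r q) → Bool)
  /-- The reconstruction function. -/
  recon : (ℓ : Fin k) → (q : (r : Fin n) → Q r) →
    ((r : Fin n) → (Fin (d r (q r)) → Bool)) → (Fin R → Bool)
  /-- Correctness. -/
  correct : ∀ (X : Fin k → Fin R → Bool) (ℓ : Fin k) (q : (r : Fin n) → Q r),
    q ∈ (D ℓ).support →
    recon ℓ q (fun r => resp r (q r) (E r X)) = X ℓ
  /-- Privacy: the marginal of each query component does not depend on `ℓ`. -/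
  privacy : ∀ (r : Fin n) (ℓ ℓ' : Fin k),
    (D ℓ).map (fun q => q r) = (D ℓ').map (fun q => q r)

attribute [instance] PIRScheme.fintypeQ

/-- A query tuple is possible if it lies in the support of `D ℓ` for some `ℓ`. -/
def PIRScheme.Possible {n k R : ℕ} (S : PIRScheme n k R)
    (q : (r : Fin n) → S.Q r) : Prop :=
  ∃ ℓ, q ∈ (S.D ℓ).support

/-- The download complexity: the maximum, over possible query tuples, of the
total number of downloaded bits. -/
noncomputable def PIRScheme.downloadComplexity {n k R : ℕ} (S : PIRScheme n k R) : ℕ :=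
  letI : DecidablePred S.Possible := Classical.decPred _
  (Finset.univ.filter S.Possible).sup (fun q => ∑ r, S.d r (q r))

/-! By privacy, the query `q₁` to the distinguished server is compatible with every record index:
for each `ℓ` there is a tuple `p ℓ` in the support of `D ℓ` sending `q₁` to that server. By
correctness, the response to `q₁` together with the other servers' responses to `p ℓ` determines
record `ℓ`. Since the response to `q₁` is common to all `ℓ`, it determines the whole database once
the `k` tuples of other responses are known, so `2 ^ (k * R) ≤ #{c₁} * (2 ^ d) ^ k`. -/

theorem card_le_ncard_range_mul_prod_ncard_range {α β ι : Type*} {γ : ι → Type*} [Finite α]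
    [Fintype ι] {f : α → β} {g : ∀ i, α → γ i}
    (hfg : Function.Injective fun a => (f a, fun i => g i a)) :
    Nat.card α ≤ (Set.range f).ncard * ∏ i, (Set.range (g i)).ncard := by
  let F : α → Set.range f × ∀ i, Set.range (g i) :=
    fun a => (Set.rangeFactorization f a, fun i => Set.rangeFactorization (g i) a)
  have hF : Function.Injective F := fun _ _ hab =>
    hfg (congrArg (fun z => (z.1.1, fun i => (z.2 i).1)) hab)
  simpa only [Nat.card_prod, Nat.card_pi, Nat.card_coe_set_eq] using
    Nat.card_le_card_of_injective F hF

namespace PIRScheme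

variable {n k R : ℕ} (S : PIRScheme n k R)

/-- The response `c_r` of server `r` to the query `x` when the database is `X`. -/
def response (r : Fin n) (x : S.Q r) (X : Fin k → Fin R → Bool) : Fin (S.d r x) → Bool :=
  S.resp r x (S.E r X)

/-- The tuple `c_other` of responses of all servers but `r₀` to the query tuple `q` when the
database is `X`. -/
def otherResponses (r₀ : Fin n) (q : ∀ r, S.Q r) (X : Fin k → Fin R → Bool)
    (r : {r : Fin n // r ≠ r₀}) : Fin (S.d r.1 (q r.1)) → Bool :=
  S.response r.1 (q r.1) X

theorem setOf_possible_response_eq_range (r₀ : Fin n) (q : ∀ r, S.Q r) :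
    {c : Fin (S.d r₀ (q r₀)) → Bool |
      ∃ co : (r : {r : Fin n // r ≠ r₀}) → Fin (S.d r.1 (q r.1)) → Bool,
        ∃ X, S.resp r₀ (q r₀) (S.E r₀ X) = c ∧ ∀ r, S.resp r.1 (q r.1) (S.E r.1 X) = co r} =
      Set.range (S.response r₀ (q r₀)) := by
  ext c
  constructor
  · rintro ⟨_, X, hX, _⟩
    exact ⟨X, hX⟩
  · rintro ⟨X, hX⟩
    exact ⟨S.otherResponses r₀ q X, X, hX, fun _ => rfl⟩

theorem setOf_possible_otherResponses_eq_range (r₀ : Fin n) (q : ∀ r, S.Q r) :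
    {co : (r : {r : Fin n // r ≠ r₀}) → Fin (S.d r.1 (q r.1)) → Bool |
      ∃ c : Fin (S.d r₀ (q r₀)) → Bool,
        ∃ X, S.resp r₀ (q r₀) (S.E r₀ X) = c ∧ ∀ r, S.resp r.1 (q r.1) (S.E r.1 X) = co r} =
      Set.range (S.otherResponses r₀ q) := by
  ext co
  constructor
  · rintro ⟨_, X, _, hX⟩
    exact ⟨X, funext hX⟩
  · rintro ⟨X, rfl⟩
    exact ⟨S.response r₀ (q r₀) X, X, rfl, fun _ => rfl⟩

variable {S}

theorem Possible.exists_mem_support_apply_eq {q : ∀ r, S.Q r} (hq : S.Possible q) (r : Fin n)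
    (ℓ : Fin k) : ∃ p ∈ (S.D ℓ).support, p r = q r := by
  obtain ⟨m, hm⟩ := hq
  have hqr : q r ∈ ((S.D m).map fun p => p r).support :=
    (PMF.mem_support_map_iff _ _ _).2 ⟨q, hm, rfl⟩
  rwa [S.privacy r m ℓ, PMF.mem_support_map_iff] at hqr

theorem record_eq_of_response_eq {q : ∀ r, S.Q r} {ℓ : Fin k} (hq : q ∈ (S.D ℓ).support)
    {X Y : Fin k → Fin R → Bool} (h : ∀ r, S.response r (q r) X = S.response r (q r) Y) :
    X ℓ = Y ℓ :=
  calc X ℓ = S.recon ℓ q (fun r => S.response r (q r) X) := (S.correct X ℓ q hq).symm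
    _ = S.recon ℓ q (fun r => S.response r (q r) Y) := congrArg (S.recon ℓ q) (funext h)
    _ = Y ℓ := S.correct Y ℓ q hq

theorem injective_response_prodMk_otherResponses {r₀ : Fin n} {x : S.Q r₀}
    {p : Fin k → ∀ r, S.Q r} (hp : ∀ ℓ, p ℓ ∈ (S.D ℓ).support) (hpx : ∀ ℓ, p ℓ r₀ = x) :
    Function.Injective fun X => (S.response r₀ x X, fun ℓ => S.otherResponses r₀ (p ℓ) X) := by
  intro X Y hXY
  obtain ⟨hx, hother⟩ := Prod.mk.inj hXY
  refine funext fun ℓ => record_eq_of_response_eq (hp ℓ) fun r => ?_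
  by_cases hr : r = r₀
  · subst hr
    rwa [hpx ℓ]
  · exact congrFun (congrFun hother ℓ) ⟨r, hr⟩

theorem two_pow_le_ncard_range_response_mul_pow {r₀ : Fin n} {q : ∀ r, S.Q r} {N : ℕ}
    (hq : S.Possible q)
    (hN : ∀ p, S.Possible p → p r₀ = q r₀ → (Set.range (S.otherResponses r₀ p)).ncard ≤ N) :
    2 ^ (k * R) ≤ (Set.range (S.response r₀ (q r₀))).ncard * N ^ k := by
  choose p hp hpq using hq.exists_mem_support_apply_eq r₀
  calc 2 ^ (k * R) = Nat.card (Fin k → Fin R → Bool) := by simp [← pow_mul, mul_comm]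
    _ ≤ (Set.range (S.response r₀ (q r₀))).ncard *
          ∏ ℓ, (Set.range (S.otherResponses r₀ (p ℓ))).ncard :=
      card_le_ncard_range_mul_prod_ncard_range (injective_response_prodMk_otherResponses hp hpq)
    _ ≤ (Set.range (S.response r₀ (q r₀))).ncard * N ^ k := by
      gcongr
      simpa using Finset.prod_le_pow_card Finset.univ _ N fun ℓ _ => hN (p ℓ) ⟨ℓ, hp ℓ⟩ (hpq ℓ)

end PIRScheme

/-- Theorem 2 of the paper. If for every possible query tuple with
first component `q1` there are at most `2^d` possible response tuples of the other
servers, then for every possible query tuple with first component `q1` there are at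
least `2^(k(R-d))` possible responses of the first server. -/
theorem first_server_response_count (n k R d : ℕ) (hn : 0 < n) (hk : 1 ≤ k)
    (hdR : d ≤ R) (S : PIRScheme n k R) (q1 : S.Q ⟨0, hn⟩)
    (H : ∀ q : (r : Fin n) → S.Q r, S.Possible q → q ⟨0, hn⟩ = q1 →
      Set.ncard {co : (r : {r : Fin n // r ≠ ⟨0, hn⟩}) → (Fin (S.d r.1 (q r.1)) → Bool) |
        ∃ c1 : Fin (S.d ⟨0, hn⟩ (q ⟨0, hn⟩)) → Bool, ∃ X : Fin k → Fin R → Bool,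
          S.resp ⟨0, hn⟩ (q ⟨0, hn⟩) (S.E ⟨0, hn⟩ X) = c1 ∧
          ∀ r : {r : Fin n // r ≠ ⟨0, hn⟩}, S.resp r.1 (q r.1) (S.E r.1 X) = co r}
        ≤ 2 ^ d) :
    ∀ q : (r : Fin n) → S.Q r, S.Possible q → q ⟨0, hn⟩ = q1 →
      2 ^ (k * (R - d)) ≤
        Set.ncard {c1 : Fin (S.d ⟨0, hn⟩ (q ⟨0, hn⟩)) → Bool |
          ∃ co : (r : {r : Fin n // r ≠ ⟨0, hn⟩}) → (Fin (S.d r.1 (q r.1)) → Bool),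
            ∃ X : Fin k → Fin R → Bool,
              S.resp ⟨0, hn⟩ (q ⟨0, hn⟩) (S.E ⟨0, hn⟩ X) = c1 ∧
              ∀ r : {r : Fin n // r ≠ ⟨0, hn⟩}, S.resp r.1 (q r.1) (S.E r.1 X) = co r} := by
  rintro q hq rfl
  simp only [S.setOf_possible_otherResponses_eq_range] at H
  rw [S.setOf_possible_response_eq_range]
  have hsplit : 2 ^ (k * R) = 2 ^ (k * (R - d)) * (2 ^ d) ^ k := by
    rw [← pow_mul, ← pow_add, mul_comm d k, ← mul_add, Nat.sub_add_cancel hdR]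
  have hcount := PIRScheme.two_pow_le_ncard_range_response_mul_pow hq H
  exact Nat.le_of_mul_le_mul_right (hsplit ▸ hcount) (by positivity)
end

section
/- For all integers k ≥ 1 and R ≥ 1 there exists an (R+1)-server PIR scheme for a database of k records of R bits each in which each server stores the entire kR-bit database (so the total storage is (R+1)kR bits), each query set Q_r consists of bit strings of length k·⌈log₂(R+1)⌉ (so the upload complexity is (R+1)·k·⌈log₂(R+1)⌉), and each server responds with exactly one bit to every query (so the download complexity is R + 1). -/
open scoped ENNReal

/-!
Prefix every record with a zero bit, so that its positions are indexed by `ℤ/(R+1)`. For a uniform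
vector `a ∈ (ℤ/(R+1))^k`, server `r` is asked for the sum over the records `i` of the bit at
position `(a + r e_ℓ) i`. Each query alone is uniform, whatever `ℓ` is. The answers of two servers
differ only by the contribution of record `ℓ`, whose position runs through all of `ℤ/(R+1)`;
subtracting the answer that reads the zero bit therefore recovers every bit of record `ℓ`.
-/

section BitEncodings

/-- The row-major identification of `k`-tuples of words of length `m` with words of length `k * m`.
It serves both to store a database and to serialise a query. -/
def flatten (α : Type*) (k m : ℕ) : (Fin k → Fin m → α) ≃ (Fin (k * m) → α) :=
  (Equiv.curry (Fin k) (Fin m) α).symm.trans (finProdFinEquiv.arrowCongr (Equiv.refl α))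

/-- The base-two digits of an element of `Fin n`, least significant first, as a word of the least
possible length `⌈log₂ n⌉`. -/
def binaryDigits (n : ℕ) : Fin n ↪ (Fin (Nat.clog 2 n) → Bool) :=
  (Fin.castLEEmb (Nat.le_pow_clog one_lt_two n)).trans
    (finFunctionFinEquiv.symm.trans ((Equiv.refl _).arrowCongr finTwoEquiv)).toEmbedding

/-- The coordinatewise binary encoding of a vector of `k` elements of `Fin n`. -/
def vectorDigits (k n : ℕ) : (Fin k → Fin n) ↪ (Fin (k * Nat.clog 2 n) → Bool) :=
  (binaryDigits n).arrowCongrRight.trans (flatten Bool k (Nat.clog 2 n)).toEmbedding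

end BitEncodings

section UniformInvariance

theorem map_equiv_uniformOfFintype {α β : Type*} [Fintype α] [Nonempty α] [Fintype β] [Nonempty β]
    (e : α ≃ β) : (PMF.uniformOfFintype α).map e = PMF.uniformOfFintype β := by
  classical
  ext b
  rw [PMF.map_apply, tsum_eq_single (e.symm b)]
  · simp [Fintype.card_congr e]
  · intro a ha
    exact if_neg fun hb => ha (e.eq_symm_apply.mpr hb.symm)

theorem map_comp_add_right_uniformOfFintype {G β : Type*} [Fintype G] [AddGroup G] (f : G → β)
    (g : G) :
    (PMF.uniformOfFintype G).map (fun a => f (a + g)) = (PMF.uniformOfFintype G).map f := calc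
  _ = ((PMF.uniformOfFintype G).map (Equiv.addRight g)).map f := (PMF.map_comp _ _ _).symm
  _ = (PMF.uniformOfFintype G).map f := by rw [map_equiv_uniformOfFintype]

end UniformInvariance

section Answers

variable {ι G M : Type*} [Fintype ι]

/-- The answer of a server: the sum of the entries of the table `f` selected by the query `a`, one
in each row. -/
def answer [AddCommMonoid M] (f : ι → G → M) (a : ι → G) : M :=
  ∑ i, f i (a i)

variable [AddCommGroup M]

theorem answer_sub_answer (f : ι → G → M) {a b : ι → G} {ℓ : ι} (hab : ∀ i ≠ ℓ, a i = b i) :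
    answer f a - answer f b = f ℓ (a ℓ) - f ℓ (b ℓ) := by
  rw [answer, answer, ← Finset.sum_sub_distrib]
  exact Fintype.sum_eq_single ℓ fun i hi => by rw [hab i hi, sub_self]

theorem answer_add_single_sub_answer_add_single [DecidableEq ι] [AddGroup G] (f : ι → G → M)
    (a : ι → G) (ℓ : ι) (g h : G) :
    answer f (a + Pi.single ℓ (-a ℓ + g)) - answer f (a + Pi.single ℓ (-a ℓ + h)) =
      f ℓ g - f ℓ h := by
  rw [answer_sub_answer f (ℓ := ℓ) fun i hi => by simp [hi]]
  simp

end Answers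

section ShiftScheme

/-- The database with a zero prepended to every record, so that the positions in a record are
indexed by the cyclic group `Fin (R + 1)`. -/
def zeroPad {k R : ℕ} {M : Type*} [Zero M] (X : Fin k → Fin R → M) : Fin k → Fin (R + 1) → M :=
  fun i => Matrix.vecCons 0 (X i)

theorem zeroPad_succ_sub_zeroPad_zero {k R : ℕ} {M : Type*} [AddGroup M] (X : Fin k → Fin R → M)
    (i : Fin k) (j : Fin R) : zeroPad X i j.succ - zeroPad X i 0 = X i j := by
  simp [zeroPad]

variable {k R : ℕ} {Q : Type}

/-- The queries to all servers when record `ℓ` is wanted and `a` is the random vector: server `r`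
receives `a + r e_ℓ`, encoded as an element of `Q`. -/
def shiftedQueries (encode : (Fin k → Fin (R + 1)) → Q) (ℓ : Fin k) (a : Fin k → Fin (R + 1)) :
    Fin (R + 1) → Q :=
  fun r => encode (a + Pi.single ℓ r)

theorem map_apply_map_shiftedQueries (encode : (Fin k → Fin (R + 1)) → Q) (ℓ : Fin k)
    (r : Fin (R + 1)) :
    ((PMF.uniformOfFintype _).map (shiftedQueries encode ℓ)).map (fun q => q r) =
      (PMF.uniformOfFintype _).map encode := by
  rw [PMF.map_comp]
  exact map_comp_add_right_uniformOfFintype encode (Pi.single ℓ r)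

/-- The `(R + 1)`-server scheme in which server `r` is queried at `a + r e_ℓ` for a uniform vector
`a` and answers with one bit. Addition and subtraction in `Bool` are exclusive or.
`Function.invFun` decodes the queries; its junk values outside the range of `encode` are harmless,
as no such query is ever sent. -/
noncomputable def shiftScheme [Fintype Q] (encode : (Fin k → Fin (R + 1)) ↪ Q) :
    PIRScheme (R + 1) k R where
  Q _ := Q
  fintypeQ _ := inferInstance
  s _ := k * R
  E _ := flatten Bool k R
  D ℓ := (PMF.uniformOfFintype _).map (shiftedQueries encode ℓ)
  d _ _ := 1
  resp _ q x _ := answer (zeroPad ((flatten Bool k R).symm x)) (Function.invFun encode q)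
  recon ℓ q c j :=
    -- the query to server `0` is `a` itself
    let a := Function.invFun encode (q 0)
    c (-a ℓ + j.succ) 0 - c (-a ℓ + 0) 0
  correct X ℓ q hq := by
    rw [PMF.support_map] at hq
    obtain ⟨a, -, rfl⟩ := hq
    have decode_query (r : Fin (R + 1)) :
        Function.invFun encode (shiftedQueries encode ℓ a r) = a + Pi.single ℓ r :=
      Function.leftInverse_invFun encode.injective _
    have decode_query_zero : Function.invFun encode (shiftedQueries encode ℓ a 0) = a := by
      rw [decode_query, Pi.single_zero, add_zero]
    funext j
    simp only [decode_query_zero]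
    simp only [decode_query, Equiv.symm_apply_apply]
    rw [answer_add_single_sub_answer_add_single, zeroPad_succ_sub_zeroPad_zero]
  privacy r ℓ ℓ' := by
    rw [map_apply_map_shiftedQueries, map_apply_map_shiftedQueries]

end ShiftScheme

namespace PIRScheme

variable {n k R : ℕ} (S : PIRScheme n k R)

theorem exists_possible (ℓ : Fin k) : ∃ q, S.Possible q :=
  (S.D ℓ).support_nonempty.imp fun _ hq => ⟨ℓ, hq⟩

theorem downloadComplexity_eq_of_forall_possible (ℓ : Fin k) {c : ℕ}
    (hc : ∀ q, S.Possible q → ∑ r, S.d r (q r) = c) : S.downloadComplexity = c := by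
  classical
  obtain ⟨q, hq⟩ := S.exists_possible ℓ
  rw [downloadComplexity, Finset.sup_congr rfl fun p hp => hc p (Finset.mem_filter.mp hp).2]
  exact Finset.sup_const ⟨q, Finset.mem_filter.mpr ⟨Finset.mem_univ q, hq⟩⟩ c

end PIRScheme

/-- Construction 2 / Theorem 7 of the paper. There is an
`(R+1)`-server PIR scheme for `k` records of `R` bits each in which every server
stores the whole `kR`-bit database (total storage `(R+1)kR`), every query is a bit
string of length `k⌈log₂(R+1)⌉` (upload complexity `(R+1)k⌈log₂(R+1)⌉`), and every
server responds with exactly one bit to every query (download complexity `R + 1`). -/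
theorem construction_two (k R : ℕ) (hk : 1 ≤ k) (hR : 1 ≤ R) :
    ∃ S : PIRScheme (R + 1) k R,
      (∀ r, S.s r = k * R) ∧
      (∑ r, S.s r = (R + 1) * (k * R)) ∧
      (∀ r, S.Q r = (Fin (k * Nat.clog 2 (R + 1)) → Bool)) ∧
      (∀ r q, S.d r q = 1) ∧
      S.downloadComplexity = R + 1 := by
  refine ⟨shiftScheme (vectorDigits k (R + 1)), fun _ => rfl, ?totalStorage, fun _ => rfl,
    fun _ _ => rfl, ?download⟩
  case totalStorage => simp [shiftScheme]
  case download =>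
    refine PIRScheme.downloadComplexity_eq_of_forall_possible _ ⟨0, hk⟩ fun q _ => ?_
    simp [shiftScheme]
end

section
/- Let n ≥ 2, k ≥ 1 and R ≥ 1 be integers with (n−1) dividing R. Then there exists an n-server PIR scheme for a database of k records of R bits each in which each server stores the entire kR-bit database (so the total storage is nkR bits), each query set Q_r consists of bit strings of length k·⌈log₂ n⌉ (so the upload complexity is n·k·⌈log₂ n⌉), and each server responds with exactly R/(n−1) bits to every query (so the download complexity is (n/(n−1))·R). -/
open scoped ENNReal

/-!
Write `n = m + 1` and cut each record into `m` blocks of `R / m` bits, adding a zero block in front.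
A query chooses one of the `n` blocks from every record, and the answer is the sum of the chosen
blocks. To retrieve record `ℓ`, the user draws a uniformly random choice `a` and sends to server `r`
the choice `a` with `r` added cyclically at `ℓ`. The `n` answers then run over all `n` blocks of
record `ℓ`, each masked by the same sum over the other records; the answer that picks the zero block
is the mask itself. Each query on its own is a translate of `a`, hence uniform.
-/

namespace PIRScheme

theorem map_uniformOfFintype_equiv {α β : Type*} [Fintype α] [Nonempty α] [Fintype β] [Nonempty β]
    (e : α ≃ β) : (PMF.uniformOfFintype α).map e = PMF.uniformOfFintype β := by
  classical
  ext y
  rw [PMF.map_apply, tsum_eq_single (e.symm y)]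
  · simp [Fintype.card_congr e]
  · rintro x hx
    exact if_neg fun h => hx (e.eq_symm_apply.2 h.symm)

theorem downloadComplexity_eq_of_d_eq {n k R c : ℕ} (S : PIRScheme n k R) (hk : 0 < k)
    (hd : ∀ r q, S.d r q = c) : S.downloadComplexity = n * c := by
  classical
  obtain ⟨q, hq⟩ := (S.D ⟨0, hk⟩).support_nonempty
  have possible_nonempty : (Finset.univ.filter S.Possible).Nonempty :=
    ⟨q, Finset.mem_filter.2 ⟨Finset.mem_univ q, _, hq⟩⟩
  simp only [downloadComplexity, hd, Finset.sum_const, Finset.card_univ, Fintype.card_fin,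
    smul_eq_mul]
  convert Finset.sup_const possible_nonempty (n * c)

section Blocks

variable {ι G : Type*} {m : ℕ} [AddCommGroup G]

/-- The record `x`, given as a sequence of `m` blocks, with a zero block put in front. -/
def paddedRecord (x : Fin m → G) : Fin (m + 1) → G :=
  Fin.cons 0 x

/-- The answer to the query `v` on the database `X`: the sum over all records `j` of block `v j` of
the padded record. -/
def answer [Fintype ι] (v : ι → Fin (m + 1)) (X : ι → Fin m → G) : G :=
  ∑ j, paddedRecord (X j) (v j)

/-- The query sent to server `r` in order to retrieve record `ℓ`, where `a` is the user's
randomness. -/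
def query [DecidableEq ι] (a : ι → Fin (m + 1)) (ℓ : ι) (r : Fin (m + 1)) : ι → Fin (m + 1) :=
  a + Pi.single ℓ r

/-- The blocks of the requested record `ℓ`, computed from the answers `c` of the servers and the
value `v = a ℓ` of the user's randomness: server `i - v` is asked for block `i` of the padded
record. -/
def recover (v : Fin (m + 1)) (c : Fin (m + 1) → G) : Fin m → G :=
  fun i => c (i.succ - v) - c (0 - v)

theorem query_apply_self [DecidableEq ι] (a : ι → Fin (m + 1)) (ℓ : ι) (r : Fin (m + 1)) :
    query a ℓ r ℓ = a ℓ + r := by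
  simp [query]

theorem query_apply_of_ne [DecidableEq ι] (a : ι → Fin (m + 1)) {ℓ j : ι} (hj : j ≠ ℓ)
    (r : Fin (m + 1)) : query a ℓ r j = a j := by
  simp [query, hj]

theorem answer_sub_answer [Fintype ι] {v w : ι → Fin (m + 1)} {ℓ : ι}
    (hvw : ∀ j ≠ ℓ, v j = w j) (X : ι → Fin m → G) :
    answer v X - answer w X = paddedRecord (X ℓ) (v ℓ) - paddedRecord (X ℓ) (w ℓ) := by
  rw [answer, answer, ← Finset.sum_sub_distrib]
  exact Fintype.sum_eq_single ℓ fun j hj => by rw [hvw j hj, sub_self]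

theorem recover_answer_query [Fintype ι] [DecidableEq ι] (a : ι → Fin (m + 1)) (ℓ : ι)
    (X : ι → Fin m → G) : recover (a ℓ) (fun r => answer (query a ℓ r) X) = X ℓ := by
  funext i
  have queries_agree (r s : Fin (m + 1)) : ∀ j ≠ ℓ, query a ℓ r j = query a ℓ s j :=
    fun j hj => by rw [query_apply_of_ne a hj, query_apply_of_ne a hj]
  rw [recover, answer_sub_answer (queries_agree _ _), query_apply_self, query_apply_self,
    add_sub_cancel, add_sub_cancel, paddedRecord, Fin.cons_succ, Fin.cons_zero, sub_zero]

theorem map_query_uniformOfFintype [Fintype ι] [DecidableEq ι] (ℓ : ι) (r : Fin (m + 1)) :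
    (PMF.uniformOfFintype (ι → Fin (m + 1))).map (fun a => query a ℓ r) =
      PMF.uniformOfFintype (ι → Fin (m + 1)) :=
  map_uniformOfFintype_equiv (Equiv.addRight (Pi.single ℓ r : ι → Fin (m + 1)))

end Blocks

/-- A sequence of length `p * q` cut into `p` consecutive blocks of length `q`. -/
def splitBlocks (α : Type*) (p q : ℕ) : (Fin (p * q) → α) ≃ (Fin p → Fin q → α) :=
  (finProdFinEquiv.symm.arrowCongr (Equiv.refl α)).trans (Equiv.curry (Fin p) (Fin q) α)

/-- The binary encoding of the elements of `Fin n` by `⌈log₂ n⌉` bits. -/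
def encodeFin (n : ℕ) : Fin n ↪ (Fin (Nat.clog 2 n) → Bool) :=
  (Fin.castLEEmb (Nat.le_pow_clog one_lt_two n)).trans
    (finFunctionFinEquiv.symm.trans ((Equiv.refl _).arrowCongr finTwoEquiv)).toEmbedding

/-- The encoding of the queries by bit strings, each of the `k` entries separately. -/
def encodeQuery (k n : ℕ) : (Fin k → Fin n) ↪ (Fin (k * Nat.clog 2 n) → Bool) :=
  (encodeFin n).arrowCongrRight.trans (splitBlocks Bool k (Nat.clog 2 n)).symm.toEmbedding

section Scheme

variable {k m : ℕ} {β : Type}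

/-- The joint distribution of the queries for record `ℓ`, encoded by `e`. -/
noncomputable def queryDistribution (e : (Fin k → Fin (m + 1)) ↪ β) (ℓ : Fin k) :
    PMF (Fin (m + 1) → β) :=
  (PMF.uniformOfFintype (Fin k → Fin (m + 1))).map fun a r => e (query a ℓ r)

theorem map_queryDistribution (e : (Fin k → Fin (m + 1)) ↪ β) (ℓ : Fin k) (r : Fin (m + 1)) :
    (queryDistribution e ℓ).map (fun q => q r) =
      (PMF.uniformOfFintype (Fin k → Fin (m + 1))).map e := by
  rw [queryDistribution, PMF.map_comp]
  conv_rhs => rw [← map_query_uniformOfFintype ℓ r, PMF.map_comp]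
  rfl

/-- The scheme with `m + 1` servers for records of `m` blocks of `b` bits, where the queries are
encoded by `e`. Bits are added in the Boolean ring `Bool`. The user's randomness at `ℓ` is read off
from the query to server `0`. -/
noncomputable def blockScheme [Fintype β] (b : ℕ) (e : (Fin k → Fin (m + 1)) ↪ β) :
    PIRScheme (m + 1) k (m * b) where
  Q _ := β
  fintypeQ _ := inferInstance
  s _ := k * (m * b)
  E _ := (splitBlocks Bool k (m * b)).symm
  D := queryDistribution e
  d _ _ := b
  resp _ q Y := answer (Function.invFun e q) fun j =>
    splitBlocks Bool m b (splitBlocks Bool k (m * b) Y j)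
  recon ℓ q c := (splitBlocks Bool m b).symm (recover (Function.invFun e (q 0) ℓ) c)
  correct X ℓ q hq := by
    obtain ⟨a, -, rfl⟩ := (PMF.mem_support_map_iff _ _ _).1 hq
    simp only [Function.leftInverse_invFun e.injective _, Equiv.apply_symm_apply,
      query_apply_self, add_zero]
    rw [recover_answer_query, Equiv.symm_apply_apply]
  privacy r ℓ ℓ' := by
    rw [map_queryDistribution, map_queryDistribution]

end Scheme

end PIRScheme

/-- Construction 3 / Theorem 8 of the paper. For `n ≥ 2` with
`(n-1) ∣ R` there is an `n`-server PIR scheme for `k` records of `R` bits each in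
which every server stores the whole `kR`-bit database (total storage `nkR`), every
query is a bit string of length `k⌈log₂ n⌉` (upload complexity `nk⌈log₂ n⌉`), and
every server responds with exactly `R/(n-1)` bits to every query (download
complexity `(n/(n-1))·R`). -/
theorem construction_three (n k R : ℕ) (hn : 2 ≤ n) (hk : 1 ≤ k) (hR : 1 ≤ R)
    (hdvd : (n - 1) ∣ R) :
    ∃ S : PIRScheme n k R,
      (∀ r, S.s r = k * R) ∧
      (∑ r, S.s r = n * (k * R)) ∧
      (∀ r, S.Q r = (Fin (k * Nat.clog 2 n) → Bool)) ∧
      (∀ r q, S.d r q = R / (n - 1)) ∧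
      S.downloadComplexity = n * (R / (n - 1)) := by
  obtain ⟨m, rfl⟩ := Nat.exists_eq_add_of_le' (one_le_two.trans hn)
  obtain ⟨b, rfl⟩ := hdvd
  have block_length : (m + 1 - 1) * b / (m + 1 - 1) = b :=
    Nat.mul_div_cancel_left b (Nat.sub_pos_of_lt hn)
  rw [block_length]
  refine ⟨PIRScheme.blockScheme b (PIRScheme.encodeQuery k (m + 1)), fun _ => rfl, ?_,
    fun _ => rfl, fun _ _ => rfl, PIRScheme.downloadComplexity_eq_of_d_eq _ hk fun _ _ => rfl⟩
  exact Fin.sum_const (m + 1) (k * (m * b))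
end
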